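/- arXiv:1708.08873 — 5 statements merged into one kernel-verified Lean document; each statement's English description precedes it below -/
import Mathlib

section
/- Let K be a field, let U₂, U₁, U₀ be K-vector spaces, and let B : U₂ →ₗ[K] U₁ →ₗ[K] U₀ be a K-bilinear map. The set of autotopisms (f₂, f₁, f₀) of B with f₀ = id_{U₀} forms a subgroup of Aut(B), and this subgroup is isomorphic as a group to the group of units M(B)^× of the adjoint algebra M(B); explicitly, a unit (f, g) of M(B) with two-sided inverse pair (f', g') ∈ M(B) corresponds to the autotopism (f, g', id_{U₀}). -/
open MulOpposite

section Helpers

variable {K : Type*} [Field K] {U₂ U₁ U₀ : Type*}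
  [AddCommGroup U₂] [Module K U₂] [AddCommGroup U₁] [Module K U₁]
  [AddCommGroup U₀] [Module K U₀]

/-- The autotopism group. -/
def autGrp (B : U₂ →ₗ[K] U₁ →ₗ[K] U₀) :
    Subgroup ((U₂ ≃ₗ[K] U₂) × (U₁ ≃ₗ[K] U₁) × (U₀ ≃ₗ[K] U₀)) where
  carrier := {f | ∀ (u₂ : U₂) (u₁ : U₁), B (f.1 u₂) (f.2.1 u₁) = f.2.2 (B u₂ u₁)}
  one_mem' := fun _ _ => rfl
  mul_mem' := by
    intro a b ha hb u₂ u₁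
    change B (a.1 (b.1 u₂)) (a.2.1 (b.2.1 u₁)) = a.2.2 (b.2.2 (B u₂ u₁))
    rw [ha, hb]
  inv_mem' := by
    intro a ha u₂ u₁
    change B (a.1.symm u₂) (a.2.1.symm u₁) = a.2.2.symm (B u₂ u₁)
    rw [LinearEquiv.eq_symm_apply, ← ha]
    simp

/-- The autotopisms with identity last component. -/
def prinGrp (B : U₂ →ₗ[K] U₁ →ₗ[K] U₀) :
    Subgroup ((U₂ ≃ₗ[K] U₂) × (U₁ ≃ₗ[K] U₁) × (U₀ ≃ₗ[K] U₀)) where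
  carrier := {f | (∀ (u₂ : U₂) (u₁ : U₁), B (f.1 u₂) (f.2.1 u₁) = f.2.2 (B u₂ u₁)) ∧
          f.2.2 = 1}
  one_mem' := ⟨(autGrp B).one_mem, rfl⟩
  mul_mem' := by
    intro a b ha hb
    refine ⟨(autGrp B).mul_mem ha.1 hb.1, ?_⟩
    change a.2.2 * b.2.2 = 1
    rw [ha.2, hb.2, one_mul]
  inv_mem' := by
    intro a ha
    refine ⟨(autGrp B).inv_mem ha.1, ?_⟩
    change a.2.2⁻¹ = 1
    rw [ha.2, inv_one]

/-- The adjoint algebra as a monoid. -/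
def adjMon (B : U₂ →ₗ[K] U₁ →ₗ[K] U₀) :
    Submonoid (Module.End K U₂ × (Module.End K U₁)ᵐᵒᵖ) where
  carrier := {p | ∀ (u₂ : U₂) (u₁ : U₁), B (p.1 u₂) u₁ = B u₂ (p.2.unop u₁)}
  one_mem' := fun _ _ => rfl
  mul_mem' := by
    intro a b ha hb u₂ u₁
    change B (a.1 (b.1 u₂)) u₁ = B u₂ (b.2.unop (a.2.unop u₁))
    rw [ha, hb]

variable {B : U₂ →ₗ[K] U₁ →ₗ[K] U₀}

lemma adj_fst (u v : adjMon B) (h : u * v = 1) (x : U₂) : u.1.1 (v.1.1 x) = x :=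
  congrArg (fun w : adjMon B => w.1.1 x) h

lemma adj_snd (u v : adjMon B) (h : u * v = 1) (x : U₁) :
    v.1.2.unop (u.1.2.unop x) = x :=
  congrArg (fun w : adjMon B => w.1.2.unop x) h

/-- The autotopism of a unit. -/
def toPrin (u : (adjMon B)ˣ) : prinGrp B :=
  ⟨(LinearEquiv.mk u.1.1.1 u.2.1.1 (adj_fst _ _ u.4) (adj_fst _ _ u.3),
    LinearEquiv.mk u.2.1.2.unop u.1.1.2.unop (adj_snd _ _ u.4) (adj_snd _ _ u.3), 1), by
    refine ⟨fun u₂ u₁ => ?_, rfl⟩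
    change B (u.1.1.1 u₂) (u.2.1.2.unop u₁) = B u₂ u₁
    rw [u.1.2, adj_snd _ _ u.4]⟩

/-- The unit of a principal autotopism. -/
def ofPrin (f : prinGrp B) : (adjMon B)ˣ where
  val := ⟨(f.1.1.toLinearMap, op f.1.2.1.symm.toLinearMap), by
    intro u₂ u₁
    have h := f.2.1 u₂ (f.1.2.1.symm u₁)
    rw [f.2.2, LinearEquiv.apply_symm_apply] at h
    exact h⟩
  inv := ⟨(f.1.1.symm.toLinearMap, op f.1.2.1.toLinearMap), by
    intro u₂ u₁
    have h := f.2.1 (f.1.1.symm u₂) u₁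
    rw [f.2.2, LinearEquiv.apply_symm_apply] at h
    exact h.symm⟩
  val_inv := by
    refine Subtype.ext (Prod.ext ?_ (unop_injective ?_))
    · exact LinearMap.ext fun x => f.1.1.apply_symm_apply x
    · exact LinearMap.ext fun x => f.1.2.1.apply_symm_apply x
  inv_val := by
    refine Subtype.ext (Prod.ext ?_ (unop_injective ?_))
    · exact LinearMap.ext fun x => f.1.1.symm_apply_apply x
    · exact LinearMap.ext fun x => f.1.2.1.symm_apply_apply x

/-- The isomorphism. -/
def prinEquiv (B : U₂ →ₗ[K] U₁ →ₗ[K] U₀) : (adjMon B)ˣ ≃* prinGrp B where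
  toFun := toPrin
  invFun := ofPrin
  left_inv := fun u => Units.ext rfl
  right_inv := fun f => Subtype.ext (Prod.ext (LinearEquiv.ext fun _ => rfl)
    (Prod.ext (LinearEquiv.ext fun _ => rfl) f.2.2.symm))
  map_mul' := fun u v => Subtype.ext (Prod.ext (LinearEquiv.ext fun _ => rfl)
    (Prod.ext (LinearEquiv.ext fun _ => rfl) rfl))

end Helpers

/-- For a bilinear map `B : U₂ × U₁ → U₀`, the autotopisms with
identity `U₀`-component form a subgroup `H` of the autotopism group `Aut(B)`, and
`H` is isomorphic as a group to the group of units of the adjoint algebra `M(B)`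
(realized as a submonoid of `End(U₂) × End(U₁)ᵐᵒᵖ`, so that its multiplication is
`(f, g) · (f', g') = (f ∘ f', g' ∘ g)`).  Explicitly, a unit `(f, g)` with inverse
pair `(f', g')` corresponds to the autotopism `(f, g', id)`. -/
theorem principal_autotopisms_iso_adjoint_units
    {K : Type*} [Field K]
    {U₂ U₁ U₀ : Type*}
    [AddCommGroup U₂] [Module K U₂]
    [AddCommGroup U₁] [Module K U₁]
    [AddCommGroup U₀] [Module K U₀]
    (B : U₂ →ₗ[K] U₁ →ₗ[K] U₀) :
    ∃ (Aut H : Subgroup ((U₂ ≃ₗ[K] U₂) × (U₁ ≃ₗ[K] U₁) × (U₀ ≃ₗ[K] U₀)))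
      (MB : Submonoid (Module.End K U₂ × (Module.End K U₁)ᵐᵒᵖ)),
      (Aut : Set ((U₂ ≃ₗ[K] U₂) × (U₁ ≃ₗ[K] U₁) × (U₀ ≃ₗ[K] U₀))) =
        {f | ∀ (u₂ : U₂) (u₁ : U₁), B (f.1 u₂) (f.2.1 u₁) = f.2.2 (B u₂ u₁)} ∧
      (H : Set ((U₂ ≃ₗ[K] U₂) × (U₁ ≃ₗ[K] U₁) × (U₀ ≃ₗ[K] U₀))) =
        {f | (∀ (u₂ : U₂) (u₁ : U₁), B (f.1 u₂) (f.2.1 u₁) = f.2.2 (B u₂ u₁)) ∧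
          f.2.2 = 1} ∧
      H ≤ Aut ∧
      (MB : Set (Module.End K U₂ × (Module.End K U₁)ᵐᵒᵖ)) =
        {p | ∀ (u₂ : U₂) (u₁ : U₁), B (p.1 u₂) u₁ = B u₂ (p.2.unop u₁)} ∧
      ∃ φ : (↥MB)ˣ ≃* ↥H,
        ∀ u : (↥MB)ˣ,
          ((((φ u : ↥H) :
              (U₂ ≃ₗ[K] U₂) × (U₁ ≃ₗ[K] U₁) × (U₀ ≃ₗ[K] U₀)).1 :
                U₂ →ₗ[K] U₂) =
            ((u : ↥MB) : Module.End K U₂ × (Module.End K U₁)ᵐᵒᵖ).1) ∧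
          ((((φ u : ↥H) :
              (U₂ ≃ₗ[K] U₂) × (U₁ ≃ₗ[K] U₁) × (U₀ ≃ₗ[K] U₀)).2.1 :
                U₁ →ₗ[K] U₁) =
            (((u⁻¹ : (↥MB)ˣ) : ↥MB) :
              Module.End K U₂ × (Module.End K U₁)ᵐᵒᵖ).2.unop) ∧
          (((φ u : ↥H) :
              (U₂ ≃ₗ[K] U₂) × (U₁ ≃ₗ[K] U₁) × (U₀ ≃ₗ[K] U₀)).2.2 = 1) := by
  exact ⟨autGrp B, prinGrp B, adjMon B, rfl, rfl, fun _ h => h.1, rfl, prinEquiv B,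
    fun _ => ⟨rfl, rfl, rfl⟩⟩
end

section
/- Let K be a finite field, let U₂, U₁, U₀ be finite-dimensional K-vector spaces, and let B : U₂ →ₗ[K] U₁ →ₗ[K] U₀ be a K-bilinear map. Then the cardinality of the autotopism group of B satisfies card Aut(B) ≤ card M(B)^× · (card K)^{(dim_K U₀)²}, where M(B)^× is the group of units of the adjoint algebra of B. -/
/-- Over a finite field and finite-dimensional spaces, the number of
autotopisms of a bilinear map `B` is at most the number of units of the adjoint
algebra `M(B)` (pairs admitting a two-sided inverse pair in `M(B)`) times
`(card K) ^ (dim U₀)²`. -/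
theorem card_autotopism_le
    {K : Type*} [Field K] [Finite K]
    {U₂ U₁ U₀ : Type*}
    [AddCommGroup U₂] [Module K U₂] [FiniteDimensional K U₂]
    [AddCommGroup U₁] [Module K U₁] [FiniteDimensional K U₁]
    [AddCommGroup U₀] [Module K U₀] [FiniteDimensional K U₀]
    (B : U₂ →ₗ[K] U₁ →ₗ[K] U₀) :
    Nat.card {f : (U₂ ≃ₗ[K] U₂) × (U₁ ≃ₗ[K] U₁) × (U₀ ≃ₗ[K] U₀) //
        ∀ (u₂ : U₂) (u₁ : U₁), B (f.1 u₂) (f.2.1 u₁) = f.2.2 (B u₂ u₁)} ≤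
      Nat.card {p : Module.End K U₂ × Module.End K U₁ //
          (∀ (u₂ : U₂) (u₁ : U₁), B (p.1 u₂) u₁ = B u₂ (p.2 u₁)) ∧
          ∃ q : Module.End K U₂ × Module.End K U₁,
            (∀ (u₂ : U₂) (u₁ : U₁), B (q.1 u₂) u₁ = B u₂ (q.2 u₁)) ∧
            p.1 * q.1 = 1 ∧ q.1 * p.1 = 1 ∧ p.2 * q.2 = 1 ∧ q.2 * p.2 = 1} *
        Nat.card K ^ (Module.finrank K U₀) ^ 2 := by
  classical
  have : Finite U₂ := Module.finite_of_finite K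
  have : Finite U₁ := Module.finite_of_finite K
  have : Finite U₀ := Module.finite_of_finite K
  have : Finite (Module.End K U₂) := Module.finite_of_finite K
  have : Finite (Module.End K U₁) := Module.finite_of_finite K
  have : Finite (Module.End K U₀) := Module.finite_of_finite K
  have hcard : Nat.card (Module.End K U₀) = Nat.card K ^ (Module.finrank K U₀) ^ 2 := by
    rw [Module.natCard_eq_pow_finrank (K := K), Module.finrank_linearMap, sq]
  rw [← hcard, ← Nat.card_prod]
  set A := {f : (U₂ ≃ₗ[K] U₂) × (U₁ ≃ₗ[K] U₁) × (U₀ ≃ₗ[K] U₀) //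
        ∀ (u₂ : U₂) (u₁ : U₁), B (f.1 u₂) (f.2.1 u₁) = f.2.2 (B u₂ u₁)}
  let r : A → Module.End K U₀ := fun a => (a.1.2.2 : U₀ →ₗ[K] U₀)
  have hs : ∃ s : Module.End K U₀ → A, ∀ a, r (s (r a)) = r a := by
    have : Nonempty A := ⟨⟨(LinearEquiv.refl K _, LinearEquiv.refl K _, LinearEquiv.refl K _),
      fun _ _ => rfl⟩⟩
    exact ⟨Function.invFun r, fun a => Function.invFun_eq ⟨a, rfl⟩⟩
  obtain ⟨s, hs⟩ := hs
  have key : ∀ a u v, B ((s (r a)).1.1 u) ((s (r a)).1.2.1 v) = B (a.1.1 u) (a.1.2.1 v) := by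
    intro a u v
    rw [(s (r a)).2, a.2]
    exact LinearMap.congr_fun (hs a) (B u v)
  let h2 : A → (U₂ ≃ₗ[K] U₂) := fun a => a.1.1.symm.trans (s (r a)).1.1
  let h1 : A → (U₁ ≃ₗ[K] U₁) := fun a => a.1.2.1.symm.trans (s (r a)).1.2.1
  have hk : ∀ a u v, B (h2 a u) (h1 a v) = B u v := by
    intro a u v
    simp only [h2, h1, LinearEquiv.trans_apply, key, LinearEquiv.apply_symm_apply]
  refine Nat.card_le_card_of_injective
    (fun a => (⟨((h2 a : U₂ →ₗ[K] U₂), ((h1 a).symm : U₁ →ₗ[K] U₁)), ?_,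
      (((h2 a).symm : U₂ →ₗ[K] U₂), (h1 a : U₁ →ₗ[K] U₁)), ?_, ?_, ?_, ?_, ?_⟩, r a)) ?_
  · intro u v
    simpa using hk a u ((h1 a).symm v)
  · intro u v
    simpa using (hk a ((h2 a).symm u) v).symm
  · ext x; simp
  · ext x; simp
  · ext x; simp
  · ext x; simp
  · intro a b hab
    simp only [Prod.mk.injEq, Subtype.mk.injEq] at hab
    obtain ⟨⟨e2, e1⟩, e0⟩ := hab
    apply Subtype.ext
    refine Prod.ext ?_ (Prod.ext ?_ ?_)
    · have e : h2 a = h2 b := LinearEquiv.toLinearMap_injective e2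
      ext x
      have := LinearEquiv.congr_fun e (a.1.1 x)
      simp only [h2, e0, LinearEquiv.trans_apply, LinearEquiv.symm_apply_apply,
        EmbeddingLike.apply_eq_iff_eq] at this
      rw [LinearEquiv.eq_symm_apply] at this
      exact this.symm
    · have e : (h1 a).symm = (h1 b).symm := LinearEquiv.toLinearMap_injective e1
      ext x
      have := LinearEquiv.congr_fun e ((s (r b)).1.2.1 x)
      simpa [h1, e0] using this
    · exact LinearEquiv.toLinearMap_injective e0
end

section
/- Let K be a finite field, let U₂, U₁, U₀ be finite-dimensional K-vector spaces, and let B : U₂ →ₗ[K] U₁ →ₗ[K] U₀ be a K-bilinear map. Then card L(B)^× · card M(B)^× · card R(B)^× ≤ card Aut(B) · card C(B)^×; that is, the cardinality of the autotopism group of B is at least the cardinality of the unit group of T(B) = L(B) ⊕ M(B) ⊕ R(B) divided by the cardinality of the unit group of the centroid C(B). -/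
theorem aux_card_le_mul_of_fiber {S A C : Type*} [Finite A] [Finite C] (φ : S → A)
    (h : ∀ s, ∃ ψ : {t // φ t = φ s} → C, Function.Injective ψ) :
    Nat.card S ≤ Nat.card A * Nat.card C := by
  classical
  have key : ∃ F : S → A × C, Function.Injective F := by
    have h' : ∀ a : A, ∃ ψ : {t // φ t = a} → C, Function.Injective ψ := by
      intro a
      by_cases ha : ∃ s, φ s = a
      · obtain ⟨s, rfl⟩ := ha
        exact h s
      · have : IsEmpty {t // φ t = a} := ⟨fun t => ha ⟨t.1, t.2⟩⟩
        exact ⟨fun t => isEmptyElim t, fun t => isEmptyElim t⟩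
    choose ψ hψ using h'
    refine ⟨fun s => (φ s, ψ (φ s) ⟨s, rfl⟩), ?_⟩
    have gen : ∀ a b : A, a = b → ∀ (s : {t // φ t = a}) (t : {t // φ t = b}),
        ψ a s = ψ b t → s.1 = t.1 := by
      rintro a _ rfl s t e
      rw [hψ a e]
    intro s t e
    exact gen _ _ (congrArg Prod.fst e) ⟨s, rfl⟩ ⟨t, rfl⟩ (congrArg Prod.snd e)
  obtain ⟨F, hF⟩ := key
  rw [← Nat.card_prod]
  exact Nat.card_le_card_of_injective F hF

theorem aux_card_le_mul_of_rel {S A C : Type*} [Finite A] [Finite C] (P : S → S → Prop)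
    (φ : S → A) (hP : ∀ s t, φ t = φ s → P s t)
    (h : ∀ s, ∃ ψ : {t // P s t} → C, Function.Injective ψ) :
    Nat.card S ≤ Nat.card A * Nat.card C := by
  refine aux_card_le_mul_of_fiber φ fun s => ?_
  obtain ⟨ψ, hψ⟩ := h s
  refine ⟨fun t => ψ ⟨t.1, hP s t.1 t.2⟩, fun t t' e => ?_⟩
  have := congrArg Subtype.val (hψ e)
  exact Subtype.ext this

theorem aux_cancel_mid {M : Type*} [Monoid M] {a b c d : M} (h : b * c = 1) :
    (a * b) * (c * d) = a * d := by
  rw [mul_assoc, ← mul_assoc b, h, one_mul]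

/-- In a monoid, equality of products gives equality of quotients. -/
theorem aux_quot {M : Type*} [Monoid M] {f₁ f₂ m₁ m₂ q₂ n₁ : M}
    (e : f₁ * m₁ = f₂ * m₂) (h₂ : q₂ * f₂ = 1) (h₁ : m₁ * n₁ = 1) :
    q₂ * f₁ = m₂ * n₁ := by
  calc q₂ * f₁ = q₂ * (f₁ * m₁) * n₁ := by rw [mul_assoc, mul_assoc, h₁, mul_one]
    _ = m₂ * n₁ := by rw [e, ← mul_assoc, h₂, one_mul]

theorem aux_inv_unique {M : Type*} [Monoid M] {f g q : M}
    (h : f * q = 1) (h' : q * g = 1) : f = g := left_inv_eq_right_inv h h'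

theorem aux_right_cancel {M : Type*} [Monoid M] {a b f q : M}
    (h : f * q = 1) (e : a * f = b * f) : a = b := by
  rw [← mul_one a, ← h, ← mul_assoc, e, mul_assoc, h, mul_one]

theorem aux_left_cancel {M : Type*} [Monoid M] {a b f q : M}
    (h : q * f = 1) (e : f * a = f * b) : a = b := by
  rw [← one_mul a, ← h, mul_assoc, e, ← mul_assoc, h, one_mul]

/-- Over a finite field and finite-dimensional spaces,
`card L(B)ˣ * card M(B)ˣ * card R(B)ˣ ≤ card Aut(B) * card C(B)ˣ`, where units of
each algebra are the elements admitting a two-sided inverse inside that algebra. -/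
theorem card_units_le_card_autotopism_mul_card_centroid_units
    {K : Type*} [Field K] [Finite K]
    {U₂ U₁ U₀ : Type*}
    [AddCommGroup U₂] [Module K U₂] [FiniteDimensional K U₂]
    [AddCommGroup U₁] [Module K U₁] [FiniteDimensional K U₁]
    [AddCommGroup U₀] [Module K U₀] [FiniteDimensional K U₀]
    (B : U₂ →ₗ[K] U₁ →ₗ[K] U₀) :
    Nat.card {p : Module.End K U₂ × Module.End K U₀ //
        (∀ (u₂ : U₂) (u₁ : U₁), B (p.1 u₂) u₁ = p.2 (B u₂ u₁)) ∧
        ∃ q : Module.End K U₂ × Module.End K U₀,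
          (∀ (u₂ : U₂) (u₁ : U₁), B (q.1 u₂) u₁ = q.2 (B u₂ u₁)) ∧
          p.1 * q.1 = 1 ∧ q.1 * p.1 = 1 ∧ p.2 * q.2 = 1 ∧ q.2 * p.2 = 1} *
    Nat.card {p : Module.End K U₂ × Module.End K U₁ //
        (∀ (u₂ : U₂) (u₁ : U₁), B (p.1 u₂) u₁ = B u₂ (p.2 u₁)) ∧
        ∃ q : Module.End K U₂ × Module.End K U₁,
          (∀ (u₂ : U₂) (u₁ : U₁), B (q.1 u₂) u₁ = B u₂ (q.2 u₁)) ∧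
          p.1 * q.1 = 1 ∧ q.1 * p.1 = 1 ∧ p.2 * q.2 = 1 ∧ q.2 * p.2 = 1} *
    Nat.card {p : Module.End K U₁ × Module.End K U₀ //
        (∀ (u₂ : U₂) (u₁ : U₁), B u₂ (p.1 u₁) = p.2 (B u₂ u₁)) ∧
        ∃ q : Module.End K U₁ × Module.End K U₀,
          (∀ (u₂ : U₂) (u₁ : U₁), B u₂ (q.1 u₁) = q.2 (B u₂ u₁)) ∧
          p.1 * q.1 = 1 ∧ q.1 * p.1 = 1 ∧ p.2 * q.2 = 1 ∧ q.2 * p.2 = 1} ≤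
    Nat.card {f : (U₂ ≃ₗ[K] U₂) × (U₁ ≃ₗ[K] U₁) × (U₀ ≃ₗ[K] U₀) //
        ∀ (u₂ : U₂) (u₁ : U₁), B (f.1 u₂) (f.2.1 u₁) = f.2.2 (B u₂ u₁)} *
    Nat.card {p : Module.End K U₂ × Module.End K U₁ × Module.End K U₀ //
        (∀ (u₂ : U₂) (u₁ : U₁),
          B (p.1 u₂) u₁ = B u₂ (p.2.1 u₁) ∧ B (p.1 u₂) u₁ = p.2.2 (B u₂ u₁)) ∧
        ∃ q : Module.End K U₂ × Module.End K U₁ × Module.End K U₀,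
          (∀ (u₂ : U₂) (u₁ : U₁),
            B (q.1 u₂) u₁ = B u₂ (q.2.1 u₁) ∧ B (q.1 u₂) u₁ = q.2.2 (B u₂ u₁)) ∧
          p.1 * q.1 = 1 ∧ q.1 * p.1 = 1 ∧
          p.2.1 * q.2.1 = 1 ∧ q.2.1 * p.2.1 = 1 ∧
          p.2.2 * q.2.2 = 1 ∧ q.2.2 * p.2.2 = 1} := by
  classical
  have : Finite U₂ := Module.finite_of_finite K
  have : Finite U₁ := Module.finite_of_finite K
  have : Finite U₀ := Module.finite_of_finite K
  have : Finite (U₂ ≃ₗ[K] U₂) := DFunLike.finite _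
  have : Finite (U₁ ≃ₗ[K] U₁) := DFunLike.finite _
  have : Finite (U₀ ≃ₗ[K] U₀) := DFunLike.finite _
  have : Finite (Module.End K U₂) := DFunLike.finite _
  have : Finite (Module.End K U₁) := DFunLike.finite _
  have : Finite (Module.End K U₀) := DFunLike.finite _
  rw [← Nat.card_prod, ← Nat.card_prod]
  generalize hL : {p : Module.End K U₂ × Module.End K U₀ //
        (∀ (u₂ : U₂) (u₁ : U₁), B (p.1 u₂) u₁ = p.2 (B u₂ u₁)) ∧
        ∃ q : Module.End K U₂ × Module.End K U₀,
          (∀ (u₂ : U₂) (u₁ : U₁), B (q.1 u₂) u₁ = q.2 (B u₂ u₁)) ∧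
          p.1 * q.1 = 1 ∧ q.1 * p.1 = 1 ∧ p.2 * q.2 = 1 ∧ q.2 * p.2 = 1} = L
  generalize hM : {p : Module.End K U₂ × Module.End K U₁ //
        (∀ (u₂ : U₂) (u₁ : U₁), B (p.1 u₂) u₁ = B u₂ (p.2 u₁)) ∧
        ∃ q : Module.End K U₂ × Module.End K U₁,
          (∀ (u₂ : U₂) (u₁ : U₁), B (q.1 u₂) u₁ = B u₂ (q.2 u₁)) ∧
          p.1 * q.1 = 1 ∧ q.1 * p.1 = 1 ∧ p.2 * q.2 = 1 ∧ q.2 * p.2 = 1} = M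
  generalize hR : {p : Module.End K U₁ × Module.End K U₀ //
        (∀ (u₂ : U₂) (u₁ : U₁), B u₂ (p.1 u₁) = p.2 (B u₂ u₁)) ∧
        ∃ q : Module.End K U₁ × Module.End K U₀,
          (∀ (u₂ : U₂) (u₁ : U₁), B u₂ (q.1 u₁) = q.2 (B u₂ u₁)) ∧
          p.1 * q.1 = 1 ∧ q.1 * p.1 = 1 ∧ p.2 * q.2 = 1 ∧ q.2 * p.2 = 1} = R
  -- data extracted from each unit group
  obtain ⟨lf, lh, lf', lh', Linj, L1, L2, L3, L4, L5, L6⟩ :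
      ∃ (f : L → Module.End K U₂) (h : L → Module.End K U₀)
        (f' : L → Module.End K U₂) (h' : L → Module.End K U₀),
        (∀ x y, f x = f y → h x = h y → x = y) ∧
        (∀ x u v, B (f x u) v = h x (B u v)) ∧ (∀ x u v, B (f' x u) v = h' x (B u v)) ∧
        (∀ x, f x * f' x = 1) ∧ (∀ x, f' x * f x = 1) ∧
        (∀ x, h x * h' x = 1) ∧ (∀ x, h' x * h x = 1) := by
    subst hL
    refine ⟨fun x => x.1.1, fun x => x.1.2, fun x => x.2.2.choose.1, fun x => x.2.2.choose.2,
      fun x y e e' => Subtype.ext (Prod.ext e e'), fun x => x.2.1,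
      fun x => x.2.2.choose_spec.1, fun x => x.2.2.choose_spec.2.1,
      fun x => x.2.2.choose_spec.2.2.1, fun x => x.2.2.choose_spec.2.2.2.1,
      fun x => x.2.2.choose_spec.2.2.2.2⟩
  obtain ⟨mf, mg, mf', mg', Minj, M1, M2, M3, M4, M5, M6⟩ :
      ∃ (f : M → Module.End K U₂) (g : M → Module.End K U₁)
        (f' : M → Module.End K U₂) (g' : M → Module.End K U₁),
        (∀ x y, f x = f y → g x = g y → x = y) ∧
        (∀ x u v, B (f x u) v = B u (g x v)) ∧ (∀ x u v, B (f' x u) v = B u (g' x v)) ∧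
        (∀ x, f x * f' x = 1) ∧ (∀ x, f' x * f x = 1) ∧
        (∀ x, g x * g' x = 1) ∧ (∀ x, g' x * g x = 1) := by
    subst hM
    refine ⟨fun x => x.1.1, fun x => x.1.2, fun x => x.2.2.choose.1, fun x => x.2.2.choose.2,
      fun x y e e' => Subtype.ext (Prod.ext e e'), fun x => x.2.1,
      fun x => x.2.2.choose_spec.1, fun x => x.2.2.choose_spec.2.1,
      fun x => x.2.2.choose_spec.2.2.1, fun x => x.2.2.choose_spec.2.2.2.1,
      fun x => x.2.2.choose_spec.2.2.2.2⟩
  obtain ⟨rg, rh, rg', rh', Rinj, R1, R3, R4, R5, R6⟩ :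
      ∃ (g : R → Module.End K U₁) (h : R → Module.End K U₀)
        (g' : R → Module.End K U₁) (h' : R → Module.End K U₀),
        (∀ x y, g x = g y → h x = h y → x = y) ∧
        (∀ x u v, B u (g x v) = h x (B u v)) ∧
        (∀ x, g x * g' x = 1) ∧ (∀ x, g' x * g x = 1) ∧
        (∀ x, h x * h' x = 1) ∧ (∀ x, h' x * h x = 1) := by
    subst hR
    refine ⟨fun x => x.1.1, fun x => x.1.2, fun x => x.2.2.choose.1, fun x => x.2.2.choose.2,
      fun x y e e' => Subtype.ext (Prod.ext e e'), fun x => x.2.1,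
      fun x => x.2.2.choose_spec.2.1,
      fun x => x.2.2.choose_spec.2.2.1, fun x => x.2.2.choose_spec.2.2.2.1,
      fun x => x.2.2.choose_spec.2.2.2.2⟩
  clear hL hM hR
  refine aux_card_le_mul_of_rel (fun s t : (L × M) × R =>
      lf s.1.1 * mf s.1.2 = lf t.1.1 * mf t.1.2 ∧
      rg s.2 * mg' s.1.2 = rg t.2 * mg' t.1.2 ∧ lh s.1.1 * rh s.2 = lh t.1.1 * rh t.2)
    (fun s => ⟨
    (LinearEquiv.ofLinearMap (lf s.1.1 * mf s.1.2) (mf' s.1.2 * lf' s.1.1)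
      (by rw [← Module.End.mul_eq_comp, aux_cancel_mid (M3 _), L3]; rfl)
      (by rw [← Module.End.mul_eq_comp, aux_cancel_mid (L4 _), M4]; rfl),
     LinearEquiv.ofLinearMap (rg s.2 * mg' s.1.2) (mg s.1.2 * rg' s.2)
      (by rw [← Module.End.mul_eq_comp, aux_cancel_mid (M6 _), R3]; rfl)
      (by rw [← Module.End.mul_eq_comp, aux_cancel_mid (R4 _), M5]; rfl),
     LinearEquiv.ofLinearMap (lh s.1.1 * rh s.2) (rh' s.2 * lh' s.1.1)
      (by rw [← Module.End.mul_eq_comp, aux_cancel_mid (R5 _), L5]; rfl)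
      (by rw [← Module.End.mul_eq_comp, aux_cancel_mid (L6 _), R6]; rfl)), ?_⟩) ?_ ?_
  · intro u v
    simp only [LinearEquiv.coe_ofLinearMap, Module.End.mul_apply]
    rw [L1, R1, M1, ← Module.End.mul_apply (mg _), M5]
    rfl
  · intro s t ht
    exact ⟨congrArg (fun z => (z.1.1 : U₂ →ₗ[K] U₂)) ht.symm,
      congrArg (fun z => (z.1.2.1 : U₁ →ₗ[K] U₁)) ht.symm,
      congrArg (fun z => (z.1.2.2 : U₀ →ₗ[K] U₀)) ht.symm⟩
  rintro ⟨⟨l₁, m₁⟩, r₁⟩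
  have cond : ∀ (l l₂ : L) (m m₂ : M), lf l * mf m = lf l₂ * mf m₂ → ∀ u v,
      B ((lf' l₂ * lf l) u) v = B u ((mg' m * mg m₂) v) ∧
      B ((lf' l₂ * lf l) u) v = (lh' l₂ * lh l) (B u v) := by
    intro l l₂ m m₂ e u v
    constructor
    · rw [aux_quot e (L4 _) (M3 _)]
      simp only [Module.End.mul_apply]
      rw [M1, M2]
    · simp only [Module.End.mul_apply]
      rw [L2, L1]
  refine ⟨fun t => ⟨(lf' t.1.1.1 * lf l₁, mg' m₁ * mg t.1.1.2, lh' t.1.1.1 * lh l₁),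
    cond _ _ _ _ t.2.1,
    (lf' l₁ * lf t.1.1.1, mg' t.1.1.2 * mg m₁, lh' l₁ * lh t.1.1.1),
    cond _ _ _ _ t.2.1.symm, ?_, ?_, ?_, ?_, ?_, ?_⟩, ?_⟩
  · exact (aux_cancel_mid (L3 _)).trans (L4 _)
  · exact (aux_cancel_mid (L3 _)).trans (L4 _)
  · exact (aux_cancel_mid (M5 _)).trans (M6 _)
  · exact (aux_cancel_mid (M5 _)).trans (M6 _)
  · exact (aux_cancel_mid (L5 _)).trans (L6 _)
  · exact (aux_cancel_mid (L5 _)).trans (L6 _)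
  rintro ⟨⟨⟨l₂, m₂⟩, r₂⟩, h₂⟩ ⟨⟨⟨l₃, m₃⟩, r₃⟩, h₃⟩ e
  obtain ⟨a₂, b₂, c₂⟩ := h₂
  obtain ⟨a₃, b₃, c₃⟩ := h₃
  have ea : lf' l₂ * lf l₁ = lf' l₃ * lf l₁ := congrArg (fun z => z.1.1) e
  have eb : mg' m₁ * mg m₂ = mg' m₁ * mg m₃ := congrArg (fun z => z.1.2.1) e
  have ec : lh' l₂ * lh l₁ = lh' l₃ * lh l₁ := congrArg (fun z => z.1.2.2) e
  have hl : l₂ = l₃ := by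
    have e1 := aux_right_cancel (L3 _) ea
    have e2 := aux_right_cancel (L5 _) ec
    exact Linj _ _ (aux_inv_unique (L3 l₂) (e1 ▸ L4 l₃)) (aux_inv_unique (L5 l₂) (e2 ▸ L6 l₃))
  subst hl
  have hm : m₂ = m₃ :=
    Minj _ _ (aux_left_cancel (L4 l₂) (a₂.symm.trans a₃)) (aux_left_cancel (M5 m₁) eb)
  subst hm
  have hr : r₂ = r₃ :=
    Rinj _ _ (aux_right_cancel (M6 m₂) (b₂.symm.trans b₃))
      (aux_left_cancel (L6 l₂) (c₂.symm.trans c₃))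
  subst hr
  rfl
end

section
/- Let K be a field, let U₂, U₁, U₀ be finite-dimensional K-vector spaces, let B : U₂ →ₗ[K] U₁ →ₗ[K] U₀ be a K-bilinear map, and let (f, g) ∈ End(U₂) × End(U₁) be an adjoint pair for B. Then there exists n ≥ 1 such that: U₂ is the internal direct sum of ker(fⁿ) and range(fⁿ); U₁ is the internal direct sum of ker(gⁿ) and range(gⁿ); and this is an orthogonal decomposition for B, meaning B u₂ u₁ = 0 whenever u₂ ∈ ker(fⁿ) and u₁ ∈ range(gⁿ), and B u₂ u₁ = 0 whenever u₂ ∈ range(fⁿ) and u₁ ∈ ker(gⁿ). -/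
/-- Fitting-type decomposition for an adjoint pair: if `(f, g)` is an
adjoint pair for `B` on finite-dimensional spaces, then for some `n ≥ 1` we have
`U₂ = ker fⁿ ⊕ range fⁿ`, `U₁ = ker gⁿ ⊕ range gⁿ`, and these decompositions are
orthogonal for `B`. -/
theorem adjoint_pair_fitting_orthogonal_decomposition
    {K : Type*} [Field K]
    {U₂ U₁ U₀ : Type*}
    [AddCommGroup U₂] [Module K U₂] [FiniteDimensional K U₂]
    [AddCommGroup U₁] [Module K U₁] [FiniteDimensional K U₁]
    [AddCommGroup U₀] [Module K U₀]
    (B : U₂ →ₗ[K] U₁ →ₗ[K] U₀)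
    (f : Module.End K U₂) (g : Module.End K U₁)
    (hadj : ∀ (u₂ : U₂) (u₁ : U₁), B (f u₂) u₁ = B u₂ (g u₁)) :
    ∃ n : ℕ, 1 ≤ n ∧
      IsCompl (LinearMap.ker (f ^ n)) (LinearMap.range (f ^ n)) ∧
      IsCompl (LinearMap.ker (g ^ n)) (LinearMap.range (g ^ n)) ∧
      (∀ u₂ ∈ LinearMap.ker (f ^ n), ∀ u₁ ∈ LinearMap.range (g ^ n), B u₂ u₁ = 0) ∧
      (∀ u₂ ∈ LinearMap.range (f ^ n), ∀ u₁ ∈ LinearMap.ker (g ^ n), B u₂ u₁ = 0) := by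
  have hpow : ∀ (n : ℕ) (u₂ : U₂) (u₁ : U₁), B ((f ^ n) u₂) u₁ = B u₂ ((g ^ n) u₁) := by
    intro n
    induction n with
    | zero => intro u₂ u₁; simp
    | succ k ih =>
      intro u₂ u₁
      rw [pow_succ, pow_succ', Module.End.mul_apply, Module.End.mul_apply, ih, hadj]
  obtain ⟨n, hn, hf, hg⟩ := ((Filter.eventually_ge_atTop 1).and
    ((LinearMap.eventually_isCompl_ker_pow_range_pow f).and
      (LinearMap.eventually_isCompl_ker_pow_range_pow g))).exists
  refine ⟨n, hn, hf, hg, ?_, ?_⟩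
  · rintro u₂ h _ ⟨v, rfl⟩
    rw [← hpow, LinearMap.mem_ker.mp h, map_zero, LinearMap.zero_apply]
  · rintro _ ⟨v, rfl⟩ u₁ h
    rw [hpow, LinearMap.mem_ker.mp h, map_zero]
end

section
/- Work over the field F₃ = ZMod 3. Define the 4×4 matrices D₁ = !![0,1,0,0; -1,0,0,0; 0,0,0,1; 0,0,-1,0], D₂ = !![0,0,0,0; 0,0,1,0; 0,-1,0,0; 0,0,0,0], D₃ = !![0,0,0,0; 0,0,0,1; 0,0,0,0; 0,-1,0,0], and E₁ = D₁, E₂ = D₂, E₃ = !![0,0,0,1; 0,0,0,0; 0,0,0,0; -1,0,0,0]. Then there is no pair consisting of an invertible 4×4 matrix f over F₃ and an invertible 3×3 matrix h over F₃ such that for each k ∈ {1, 2, 3}: f * Eₖ * fᵀ = h k 1 • D₁ + h k 2 • D₂ + h k 3 • D₃. In other words, the alternating bimaps F₃⁴ × F₃⁴ → F₃³ defined by the systems of forms (D₁, D₂, D₃) and (E₁, E₂, E₃) are not pseudo-isometric. -/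
open Matrix

/-- The system of alternating forms `D` over `𝔽₃`. -/
def D₁ : Matrix (Fin 4) (Fin 4) (ZMod 3) := !![0,1,0,0; -1,0,0,0; 0,0,0,1; 0,0,-1,0]
def D₂ : Matrix (Fin 4) (Fin 4) (ZMod 3) := !![0,0,0,0; 0,0,1,0; 0,-1,0,0; 0,0,0,0]
def D₃ : Matrix (Fin 4) (Fin 4) (ZMod 3) := !![0,0,0,0; 0,0,0,1; 0,0,0,0; 0,-1,0,0]

/-- The system of alternating forms `E` over `𝔽₃`. -/
def E₁ : Matrix (Fin 4) (Fin 4) (ZMod 3) := D₁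
def E₂ : Matrix (Fin 4) (Fin 4) (ZMod 3) := D₂
def E₃ : Matrix (Fin 4) (Fin 4) (ZMod 3) := !![0,0,0,1; 0,0,0,0; 0,0,0,0; -1,0,0,0]

/-- The determinant of `a D₁ + b D₂ + c D₃` is the square of its Pfaffian `a ^ 2`. -/
lemma det_comb_D (a b c : ZMod 3) : (a • D₁ + b • D₂ + c • D₃).det = a ^ 4 := by
  revert a b c
  decide +kernel

/-- The alternating bimaps `𝔽₃⁴ × 𝔽₃⁴ → 𝔽₃³` given by the systems of
forms `(D₁, D₂, D₃)` and `(E₁, E₂, E₃)` are not pseudo-isometric: there is no pair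
of invertible matrices `f ∈ GL₄(𝔽₃)`, `h ∈ GL₃(𝔽₃)` with
`f * Eₖ * fᵀ = Σⱼ h k j • Dⱼ` for each `k`. -/
theorem D_E_not_pseudo_isometric :
    ¬ ∃ (f : Matrix (Fin 4) (Fin 4) (ZMod 3)) (h : Matrix (Fin 3) (Fin 3) (ZMod 3)),
      IsUnit f ∧ IsUnit h ∧
      f * E₁ * fᵀ = h 0 0 • D₁ + h 0 1 • D₂ + h 0 2 • D₃ ∧
      f * E₂ * fᵀ = h 1 0 • D₁ + h 1 1 • D₂ + h 1 2 • D₃ ∧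
      f * E₃ * fᵀ = h 2 0 • D₁ + h 2 1 • D₂ + h 2 2 • D₃ := by
  rintro ⟨f, h, hf, -, -, h2, h3⟩
  have d2 : E₂.det = 0 := by decide +kernel
  have d3 : E₃.det = 0 := by decide +kernel
  have d23 : (E₂ + E₃).det = 1 := by decide +kernel
  have hsum : f * (E₂ + E₃) * fᵀ
      = (h 1 0 + h 2 0) • D₁ + (h 1 1 + h 2 1) • D₂ + (h 1 2 + h 2 2) • D₃ := by
    rw [mul_add, add_mul, h2, h3]
    module
  have e2 := congrArg Matrix.det h2
  have e3 := congrArg Matrix.det h3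
  have e23 := congrArg Matrix.det hsum
  rw [det_comb_D, det_mul, det_mul, d2, mul_zero, zero_mul] at e2
  rw [det_comb_D, det_mul, det_mul, d3, mul_zero, zero_mul] at e3
  have z2 : h 1 0 = 0 := pow_eq_zero_iff (n := 4) (by norm_num) |>.1 e2.symm
  have z3 : h 2 0 = 0 := pow_eq_zero_iff (n := 4) (by norm_num) |>.1 e3.symm
  rw [det_comb_D, det_mul, det_mul, d23, det_transpose, z2, z3] at e23
  have hd : f.det ≠ 0 := ((Matrix.isUnit_iff_isUnit_det f).1 hf).ne_zero
  apply hd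
  simpa using e23
end
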